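/- arXiv:1904.05302 — 2 statements merged into one kernel-verified Lean document; each statement's English description precedes it below -/
import Mathlib

section
/- Let P(z) = ∑_{j=0}^{n} a_j z^j be a complex polynomial of degree n > 2 all of whose zeros lie in |z| ≤ k with k ≥ 1, let m = min_{|z|=k}|P(z)|, and let 0 ≤ l < 1. Then max_{|z|=1}|P′(z)| ≥ (n/(1+k^n))·(max_{|z|=1}|P(z)| + l·m) + (1 − 1/k^2)|a_1| + (1/(k^n(1+k^n)))·{ ((k^n|a_n| − l·m − |a_0|)/(k^n|a_n| − l·m + |a_0|))·(k^n·max_{|z|=1}|P(z)| − l·m) + k^{n−1}|a_{n−1}|·((k^n − 1)/n − (k^{n−2} − 1)/(n−2))·(n + (k^n|a_n| − l·m − |a_0|)/(k^n|a_n| − l·m + |a_0|)) }. -/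
open Polynomial Metric

/-- The maximum of `|P(z)|` over the circle `|z| = r`. -/
noncomputable def maxMod (P : Polynomial ℂ) (r : ℝ) : ℝ :=
  ⨆ z : sphere (0 : ℂ) r, ‖P.eval (z : ℂ)‖

/-- The minimum of `|P(z)|` over the circle `|z| = r`. -/
noncomputable def minMod (P : Polynomial ℂ) (r : ℝ) : ℝ :=
  ⨅ z : sphere (0 : ℂ) r, ‖P.eval (z : ℂ)‖

lemma re_ge {z w : ℂ} (hz : ‖z‖ = 1) (hw : ‖w‖ ≤ 1) (h : z ≠ w) :
    1 / (1 + ‖w‖) ≤ (z * (1 / (z - w))).re := by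
  have h1 : z * (1 / (z - w)) = 1 / (1 - w / z) := by
    have : z ≠ 0 := by intro h0; simp [h0] at hz
    have h2 : z - w ≠ 0 := sub_ne_zero.2 h
    field_simp
  rw [h1]
  have hz0 : z ≠ 0 := by intro h0; simp [h0] at hz
  have hnorm : ‖w / z‖ = ‖w‖ := by rw [norm_div, hz, div_one]
  have hne : w / z ≠ 1 := by
    intro h3; rw [div_eq_one_iff_eq hz0] at h3; exact h h3.symm
  rw [← hnorm] at hw ⊢
  generalize w / z = v at hw hne
  have hp : 0 < Complex.normSq (1 - v) := Complex.normSq_pos.2 (sub_ne_zero.2 hne.symm)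
  rw [one_div (1 - v), Complex.inv_re, div_le_div_iff₀ (by positivity) hp]
  have hv : ‖v‖ ^ 2 = v.re * v.re + v.im * v.im := by
    rw [← Complex.normSq_eq_norm_sq, Complex.normSq_apply]
  have hre := Complex.abs_re_le_norm v
  rw [abs_le] at hre
  have : Complex.normSq (1 - v) = 1 - 2 * v.re + ‖v‖ ^ 2 := by
    rw [hv, Complex.normSq_apply]; simp; ring
  rw [this]
  simp only [Complex.sub_re, Complex.one_re]
  nlinarith [norm_nonneg v, mul_nonneg (by linarith : 0 ≤ ‖v‖ + v.re) (by linarith : 0 ≤ 1 - ‖v‖)]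

lemma dub (s : Multiset ℂ) (z : ℂ) (hz : ‖z‖ = 1) :
    (∀ w ∈ s, ‖w‖ ≤ 1) → (∀ w ∈ s, z ≠ w) → ‖s.prod‖ ≤ 1 ∧ 
    ((s.card : ℝ) + (1 - ‖s.prod‖) / (1 + ‖s.prod‖)) / 2 ≤
      ((s.map fun w => z * (1 / (z - w))).sum).re := by
  induction s using Multiset.induction_on with
  | empty => intro _ _; simp
  | cons a s ih =>
    intro h1 h2
    obtain ⟨hx, ih⟩ := ih (fun w hw => h1 w (Multiset.mem_cons_of_mem hw))
      (fun w hw => h2 w (Multiset.mem_cons_of_mem hw))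
    have ha := h1 a (Multiset.mem_cons_self a s)
    have hr := re_ge hz ha (h2 a (Multiset.mem_cons_self a s))
    simp only [Multiset.prod_cons, norm_mul, Multiset.card_cons, Multiset.map_cons,
      Multiset.sum_cons, Complex.add_re]
    have h0 := norm_nonneg a
    have h0' := norm_nonneg s.prod
    set x := ‖s.prod‖
    set y := ‖a‖
    refine ⟨by nlinarith, ?_⟩
    have key : (1 - y * x) / (1 + y * x) ≤ (1 - x) / (1 + x) + (2 / (1 + y) - 1) := by
      have : (1 - x) / (1 + x) + (2 / (1 + y) - 1) - (1 - y * x) / (1 + y * x)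
          = (1 - x) * (1 - y) * (1 - x * y) / ((1 + x) * (1 + y) * (1 + y * x)) := by
        field_simp; ring
      have h3 : 0 ≤ (1 - x) * (1 - y) * (1 - x * y) / ((1 + x) * (1 + y) * (1 + y * x)) := by
        have : 0 ≤ 1 - x * y := by nlinarith
        have : 0 ≤ 1 - x := by linarith
        have : 0 ≤ 1 - y := by linarith
        positivity
      linarith
    push_cast
    have : 2 / (1 + y) = 2 * (1 / (1 + y)) := by ring
    linarith

lemma K0 (n : ℕ) (H : ℂ[X]) (hd : H.natDegree = n) (hr : ∀ w, H.IsRoot w → ‖w‖ ≤ 1)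
    (z : ℂ) (hz : ‖z‖ = 1) (hne : H.eval z ≠ 0) :
    ‖H.coeff 0‖ ≤ ‖H.coeff n‖ ∧
    ((n : ℝ) + (‖H.coeff n‖ - ‖H.coeff 0‖) / (‖H.coeff n‖ + ‖H.coeff 0‖)) / 2 ≤
      (z * H.derivative.eval z / H.eval z).re := by
  have hH : H ≠ 0 := by rintro rfl; simp at hne
  have hs : H.Splits := IsAlgClosed.splits H
  have := dub H.roots z hz (fun w hw => hr w (isRoot_of_mem_roots hw))
    (fun w hw h => hne (by rw [h]; exact isRoot_of_mem_roots hw))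
  obtain ⟨hx, h⟩ := this
  have hc : ‖H.coeff 0‖ = ‖H.coeff n‖ * ‖H.roots.prod‖ := by
    rw [hs.coeff_zero_eq_leadingCoeff_mul_prod_roots]
    simp [← hd]
  have hcard : H.roots.card = n := by rw [← hd]; exact hs.natDegree_eq_card_roots.symm
  have hlead : 0 < ‖H.coeff n‖ := by
    rw [← hd]; exact norm_pos_iff.2 (leadingCoeff_ne_zero.2 hH)
  refine ⟨by rw [hc]; nlinarith, ?_⟩
  rw [mul_div_assoc, hs.eval_derivative_div_eval_of_ne_zero hne, ← Multiset.sum_map_mul_left]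
  rw [hcard] at h
  convert h using 3
  rw [hc]
  have := norm_nonneg H.roots.prod
  field_simp

lemma K1 (n : ℕ) (H : ℂ[X]) (hd : H.natDegree = n) (hr : ∀ w, H.IsRoot w → ‖w‖ ≤ 1)
    (z : ℂ) (hz : ‖z‖ = 1) :
    ‖n * H.eval z - z * H.derivative.eval z‖ ≤ ‖H.derivative.eval z‖ := by
  by_cases hne : H.eval z = 0
  · simp [hne, hz]
  obtain ⟨h1, h2⟩ := K0 n H hd hr z hz hne
  have h3 : 0 ≤ (‖H.coeff n‖ - ‖H.coeff 0‖) / (‖H.coeff n‖ + ‖H.coeff 0‖) :=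
    div_nonneg (by linarith) (by positivity)
  set ζ := z * H.derivative.eval z / H.eval z with hζ
  have e : z * H.derivative.eval z = ζ * H.eval z := by rw [hζ]; field_simp
  have e2 : ‖H.derivative.eval z‖ = ‖ζ‖ * ‖H.eval z‖ := by
    rw [← norm_mul, ← e, norm_mul, hz, one_mul]
  rw [e, e2, ← sub_mul, norm_mul]
  gcongr
  rw [← abs_of_nonneg (norm_nonneg ζ), ← abs_of_nonneg (norm_nonneg ((n:ℂ) - ζ)), ← sq_le_sq,
    ← Complex.normSq_eq_norm_sq, ← Complex.normSq_eq_norm_sq, Complex.normSq_apply,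
    Complex.normSq_apply]
  simp only [Complex.sub_re, Complex.sub_im, Complex.natCast_re, Complex.natCast_im]
  have : (0:ℝ) ≤ n := by positivity
  nlinarith

lemma K2 (n : ℕ) (H : ℂ[X]) (hd : H.natDegree = n) (hr : ∀ w, H.IsRoot w → ‖w‖ ≤ 1)
    (z : ℂ) (hz : ‖z‖ = 1) :
    ((n : ℝ) + (‖H.coeff n‖ - ‖H.coeff 0‖) / (‖H.coeff n‖ + ‖H.coeff 0‖)) / 2 * ‖H.eval z‖
      ≤ ‖H.derivative.eval z‖ := by
  by_cases hne : H.eval z = 0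
  · simp [hne]
  obtain ⟨h1, h2⟩ := K0 n H hd hr z hz hne
  have h4 := h2.trans (Complex.re_le_norm _)
  rw [norm_div, norm_mul, hz, one_mul, le_div_iff₀ (norm_pos_iff.2 hne)] at h4
  exact h4

lemma quad_aux (e : ℕ) (r : ℝ) (hr0 : 0 ≤ r) (hr1 : r < 1) (β : ℂ) (hβ : ‖β‖ = 1) (w : ℂ)
    (hw : w ^ (e + 1) * (w - r) = β * (1 - r * w)) : ‖w‖ = 1 := by
  have h1 : ‖w‖ ^ (e + 1) * ‖w - r‖ = ‖1 - r * w‖ := by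
    rw [← norm_pow, ← norm_mul, hw, norm_mul, hβ, one_mul]
  have h2 : ‖1 - r * w‖ ^ 2 - ‖w - r‖ ^ 2 = (1 - r ^ 2) * (1 - ‖w‖ ^ 2) := by
    simp only [← Complex.normSq_eq_norm_sq, Complex.normSq_apply]
    simp; ring
  have h3 : 0 < 1 - r ^ 2 := by nlinarith
  have n1 := norm_nonneg (w - r)
  have n2 := norm_nonneg (1 - r * w)
  have n3 := norm_nonneg w
  rcases lt_trichotomy ‖w‖ 1 with h | h | h
  · have : ‖w‖ ^ (e + 1) ≤ 1 := pow_le_one₀ n3 h.le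
    have h5 : ‖1 - r * w‖ ≤ ‖w - r‖ := by rw [← h1]; nlinarith
    have : 0 < 1 - ‖w‖ ^ 2 := by nlinarith
    have : 0 < (1 - r ^ 2) * (1 - ‖w‖ ^ 2) := by positivity
    nlinarith
  · exact h
  · have : 1 ≤ ‖w‖ ^ (e + 1) := one_le_pow₀ h.le
    have h5 : ‖w - r‖ ≤ ‖1 - r * w‖ := by rw [← h1]; nlinarith
    have : 0 < ‖w‖ ^ 2 - 1 := by nlinarith
    have : 0 < (1 - r ^ 2) * (‖w‖ ^ 2 - 1) := by positivity
    nlinarith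

lemma quad (e : ℕ) (r : ℝ) (hr0 : 0 ≤ r) (hr1 : r < 1) (β : ℂ) (hβ : ‖β‖ = 1) (q : ℂ[X])
    (hq : q.natDegree ≤ e + 2) (M : ℝ) (hM : ∀ z : ℂ, ‖z‖ = 1 → ‖q.eval z‖ ≤ M) :
    ‖q.eval (r : ℂ) + β * (1 - r ^ 2) * q.coeff (e + 2)‖ ≤ M := by
  classical
  set B : ℂ[X] := X ^ (e + 1) * (X - C (r : ℂ)) with hB
  set D : ℂ[X] := C β * (1 - C (r : ℂ) * X) with hD
  set A : ℂ[X] := B - D with hA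
  have hBm : B.Monic := (monic_X_pow (e + 1)).mul (monic_X_sub_C _)
  have hBd : B.natDegree = e + 2 := by
    rw [hB, (monic_X_pow (e + 1)).natDegree_mul (monic_X_sub_C _)]; simp
  have hDd : D.natDegree ≤ 1 := by rw [hD]; compute_degree
  have hlt : D.degree < B.degree := by
    rw [degree_eq_natDegree hBm.ne_zero, hBd]
    refine (degree_le_of_natDegree_le hDd).trans_lt ?_
    exact_mod_cast (by omega : 1 < e + 2)
  have hAm : A.Monic := hBm.sub_of_left hlt
  have hAd : A.natDegree = e + 2 := by
    rw [hA, natDegree_sub_eq_left_of_natDegree_lt (by omega), hBd]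
  have hAe : ∀ z, A.eval z = z ^ (e + 1) * (z - r) - β * (1 - r * z) := by
    intro z; simp [hA, hB, hD]
  have hAde : ∀ z, A.derivative.eval z
      = (e + 1) * z ^ e * (z - r) + z ^ (e + 1) + β * r := by
    intro z; simp [hA, hB, hD]
  have hroot : ∀ w, A.IsRoot w → w ^ (e + 1) * (w - r) = β * (1 - r * w) := by
    intro w hw
    have : A.eval w = 0 := hw
    rw [hAe, sub_eq_zero] at this
    exact this
  have hcirc : ∀ w, A.IsRoot w → ‖w‖ = 1 := fun w hw =>
    quad_aux e r hr0 hr1 β hβ w (hroot w hw)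
  have hr2 : 0 < 1 - r ^ 2 := by nlinarith
  have hβ0 : β ≠ 0 := by rintro rfl; simp at hβ
  have hder : ∀ w, A.IsRoot w → (w - r) * A.derivative.eval w
      = β * (((e + 1) * ‖1 - r * w‖ ^ 2 + (1 - r ^ 2) : ℝ) : ℂ) := by
    intro w hw
    have hw1 := hcirc w hw
    have hw0 : w ≠ 0 := by rintro rfl; simp at hw1
    have hr' := hroot w hw
    have hcj : (‖1 - r * w‖ ^ 2 : ℂ) = (1 - r * w) * (1 - r * (starRingEnd ℂ) w) := by
      rw [← Complex.mul_conj']; simp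
    have hww : w * (starRingEnd ℂ) w = 1 := by rw [Complex.mul_conj']; simp [hw1]
    apply mul_left_cancel₀ hw0
    rw [hAde]
    push_cast
    rw [hcj]
    generalize (starRingEnd ℂ) w = v at hww
    have hv : v = 1 / w := by field_simp; rw [mul_comm]; exact hww
    subst hv
    have e1 : w ^ (e + 1) = w * w ^ e := by ring
    rw [e1] at hr' ⊢
    field_simp
    linear_combination ((e + 1) * (w - r) + w ) * hr'
  have hκ : ∀ w : ℂ, 0 < (e + 1) * ‖1 - r * w‖ ^ 2 + (1 - r ^ 2) := by intro w; positivity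
  have hdne : ∀ w, A.IsRoot w → A.derivative.eval w ≠ 0 := by
    intro w hw h0
    have := hder w hw
    rw [h0, mul_zero] at this
    exact mul_ne_zero hβ0 (Complex.ofReal_ne_zero.2 (hκ w).ne') this.symm
  have hnd : A.roots.Nodup := by
    rw [Multiset.nodup_iff_count_le_one]
    intro w
    rw [count_roots]
    by_contra! h
    have := (one_lt_rootMultiplicity_iff_isRoot hAm.ne_zero).1 h
    exact hdne w this.1 this.2
  set s := A.roots.toFinset with hs
  have hmem : ∀ w ∈ s, A.IsRoot w := fun w hw => isRoot_of_mem_roots (Multiset.mem_toFinset.1 hw)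
  have hsv : s.val = A.roots := by rw [hs, Multiset.toFinset_val, hnd.dedup]
  have hspl : A.Splits := IsAlgClosed.splits A
  have hnodal : Lagrange.nodal s (id : ℂ → ℂ) = A := by
    conv_rhs => rw [hspl.eq_prod_roots_of_monic hAm, ← hsv]
    rfl
  have hcard : s.card = e + 2 := by
    rw [Finset.card, hsv, ← hspl.natDegree_eq_card_roots, hAd]
  have hrn : ∀ w ∈ s, (r : ℂ) ≠ id w := by
    intro w hw h
    have := hcirc w (hmem w hw)
    rw [id] at h
    rw [← h, Complex.norm_real, Real.norm_of_nonneg hr0] at this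
    linarith
  set c : ℂ → ℝ := fun w => (1 - r ^ 2) / ((e + 1) * ‖1 - r * w‖ ^ 2 + (1 - r ^ 2)) with hc
  have hAr : A.eval (r : ℂ) = - β * (1 - r ^ 2) := by rw [hAe]; ring
  have hform : ∀ f : ℂ[X], f.degree < s.card → f.eval (r : ℂ) = ∑ w ∈ s, (c w : ℂ) * f.eval w := by
    intro f hf
    conv_lhs => rw [Lagrange.eq_interpolate (v := id) (Set.injOn_id _) hf]
    rw [Lagrange.eval_interpolate_not_at_node _ hrn, hnodal, hAr, Finset.mul_sum]
    refine Finset.sum_congr rfl fun w hw => ?_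
    rw [Lagrange.nodalWeight_eq_eval_derivative_nodal hw, hnodal]
    have h1 := hder w (hmem w hw)
    have h2 := hdne w (hmem w hw)
    have h3 : (w - r) ≠ 0 := sub_ne_zero.2 (Ne.symm (hrn w hw))
    have h4 : (r - w) ≠ 0 := sub_ne_zero.2 (hrn w hw)
    have h5 := Complex.ofReal_ne_zero.2 (hκ w).ne'
    simp only [id, hc]
    rw [Complex.ofReal_div]
    generalize (((e + 1) * ‖1 - r * w‖ ^ 2 + (1 - r ^ 2) : ℝ) : ℂ) = κ at h1 h5
    push_cast
    rw [← mul_assoc]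
    congr 1
    rw [eq_div_iff h5]
    field_simp
    linear_combination (1 - (r:ℂ) ^ 2) * h1
  have hc0 : ∀ w, 0 ≤ c w := fun w => div_nonneg hr2.le (hκ w).le
  have hsum : ∑ w ∈ s, c w = 1 := by
    have := hform 1 (by rw [hcard, degree_one]; exact_mod_cast (by omega : 0 < e + 2))
    simp only [eval_one, mul_one] at this
    exact_mod_cast this.symm
  have hfin := hform (q - C (q.coeff (e + 2)) * A) (by
    rw [hcard]
    rw [degree_lt_iff_coeff_zero]
    intro j hj
    rcases eq_or_lt_of_le hj with h | h
    · have : A.coeff (e + 2) = 1 := by rw [← hAd]; exact hAm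
      rw [← h]; simp [this]
    · rw [coeff_sub, coeff_C_mul, coeff_eq_zero_of_natDegree_lt (by omega : q.natDegree < j),
        coeff_eq_zero_of_natDegree_lt (by omega : A.natDegree < j)]; simp)
  rw [eval_sub, eval_mul, eval_C, hAr] at hfin
  have e3 : q.eval (r : ℂ) + β * (1 - r ^ 2) * q.coeff (e + 2) = ∑ w ∈ s, (c w : ℂ) * q.eval w := by
    rw [show q.eval (r : ℂ) + β * (1 - r ^ 2) * q.coeff (e + 2) = 
      q.eval (r : ℂ) - q.coeff (e + 2) * (-β * (1 - r ^ 2)) by ring, hfin]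
    refine Finset.sum_congr rfl fun w hw => ?_
    have : A.eval w = 0 := hmem w hw
    simp [this]
  rw [e3]
  calc _ ≤ ∑ w ∈ s, ‖(c w : ℂ) * q.eval w‖ := norm_sum_le _ _
    _ ≤ ∑ w ∈ s, c w * M := by
      refine Finset.sum_le_sum fun w hw => ?_
      rw [norm_mul, Complex.norm_real, Real.norm_of_nonneg (hc0 w)]
      exact mul_le_mul_of_nonneg_left (hM w (hcirc w (hmem w hw))) (hc0 w)
    _ = M := by rw [← Finset.sum_mul, hsum, one_mul]

lemma exists_align (a b : ℂ) : ∃ β : ℂ, ‖β‖ = 1 ∧ ‖a + β * b‖ = ‖a‖ + ‖b‖ := by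
  by_cases ha : a = 0
  · exact ⟨1, by simp, by simp [ha]⟩
  by_cases hb : b = 0
  · exact ⟨1, by simp, by simp [hb]⟩
  have ha' : (‖a‖ : ℂ) ≠ 0 := by simpa using ha
  have hb' : (‖b‖ : ℂ) ≠ 0 := by simpa using hb
  have hA : ‖a‖ ≠ 0 := by simpa using ha
  have hB : ‖b‖ ≠ 0 := by simpa using hb
  refine ⟨a / ‖a‖ * (‖b‖ / b), ?_, ?_⟩
  · simp [hA, hB]
  · have : a + a / ‖a‖ * (‖b‖ / b) * b = a / ‖a‖ * ((‖a‖ + ‖b‖ : ℝ) : ℂ) := by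
      push_cast; field_simp
    rw [this, norm_mul, Complex.norm_real, Real.norm_of_nonneg (by positivity), norm_div]
    simp [hA]

lemma reflect_eval (N : ℕ) (f : ℂ[X]) (hf : f.natDegree ≤ N) (x : ℂ) (hx : x ≠ 0) :
    (f.reflect N).eval x⁻¹ * x ^ N = f.eval x := by
  let _ := invertibleOfNonzero hx
  have := eval₂_reflect_mul_pow (RingHom.id ℂ) x N f hf
  simpa [invOf_eq_inv] using this

lemma quad2 (e : ℕ) (q : ℂ[X]) (hq : q.natDegree ≤ e + 2) (M : ℝ)
    (hM : ∀ z : ℂ, ‖z‖ = 1 → ‖q.eval z‖ ≤ M) (z : ℂ) (hz : ‖z‖ ≤ 1) :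
    ‖q.eval z‖ + (1 - ‖z‖ ^ 2) * ‖q.coeff (e + 2)‖ ≤ M := by
  rcases eq_or_lt_of_le hz with h | h
  · rw [h]; simpa using hM z h
  obtain ⟨u, hu, hzu⟩ : ∃ u : ℂ, ‖u‖ = 1 ∧ z = u * ‖z‖ := by
    by_cases h0 : z = 0
    · exact ⟨1, by simp, by simp [h0]⟩
    · have : ‖z‖ ≠ 0 := by simpa using h0
      have : (‖z‖ : ℂ) ≠ 0 := by simpa using h0
      exact ⟨z / ‖z‖, by simp [h0], by field_simp⟩
  set f : ℂ[X] := q.comp (C u * X) with hf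
  have hfe : ∀ x, f.eval x = q.eval (u * x) := by intro x; simp [hf]
  have hfc : f.coeff (e + 2) = q.coeff (e + 2) * u ^ (e + 2) := by
    rw [hf, comp_C_mul_X_coeff]
  obtain ⟨β, hβ, hal⟩ := exists_align (f.eval (‖z‖ : ℂ)) ((1 - (‖z‖ : ℂ) ^ 2) * f.coeff (e + 2))
  have hfd : f.natDegree ≤ e + 2 := by
    rw [natDegree_le_iff_coeff_eq_zero]
    intro j hj
    rw [hf, comp_C_mul_X_coeff, coeff_eq_zero_of_natDegree_lt (by omega), zero_mul]
  have := quad e ‖z‖ (norm_nonneg z) h β hβ f hfd M (by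
    intro x hx; rw [hfe]; exact hM _ (by rw [norm_mul, hu, hx, one_mul]))
  rw [mul_assoc, hal, hfe, ← hzu, hfc] at this
  have h1 : ‖(1 - (‖z‖ : ℂ) ^ 2)‖ = 1 - ‖z‖ ^ 2 := by
    have : (1 - (‖z‖ : ℂ) ^ 2) = ((1 - ‖z‖ ^ 2 : ℝ) : ℂ) := by push_cast; rfl
    rw [this, Complex.norm_real, Real.norm_of_nonneg]
    nlinarith [norm_nonneg z]
  simpa [norm_mul, h1, hu] using this

lemma frr (e : ℕ) (p : ℂ[X]) (hp : p.natDegree ≤ e + 2) (M : ℝ)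
    (hM : ∀ z : ℂ, ‖z‖ = 1 → ‖p.eval z‖ ≤ M) (z : ℂ) (hz : 1 ≤ ‖z‖) :
    ‖p.eval z‖ ≤ ‖z‖ ^ (e + 2) * M - (‖z‖ ^ (e + 2) - ‖z‖ ^ e) * ‖p.coeff 0‖ := by
  have hz0 : z ≠ 0 := by rintro rfl; simp at hz; linarith
  have hzp : 0 < ‖z‖ := by linarith
  have h := quad2 e (p.reflect (e + 2)) (natDegree_reflect_le.trans (by simp [hp])) M (by
    intro x hx
    have hx0 : x ≠ 0 := by rintro rfl; simp at hx
    have h1 := reflect_eval (e + 2) p hp x⁻¹ (inv_ne_zero hx0)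
    have h2 := hM x⁻¹ (by simp [hx])
    rw [← h1] at h2
    simpa [hx] using h2) z⁻¹ (by rw [norm_inv]; exact inv_le_one_of_one_le₀ hz)
  have h1 := reflect_eval (e + 2) p hp z hz0
  rw [← h1, norm_mul, norm_pow]
  rw [coeff_reflect, revAt_le (le_refl _), Nat.sub_self, norm_inv] at h
  have h2 := mul_le_mul_of_nonneg_left h (by positivity : 0 ≤ ‖z‖ ^ (e + 2))
  have h3 : ‖z‖ ^ (e + 2) * (‖z‖⁻¹) ^ 2 = ‖z‖ ^ e := by field_simp; ring
  have h4 : ‖z‖ ^ (e + 2) * (1 - ‖z‖⁻¹ ^ 2) = ‖z‖ ^ (e + 2) - ‖z‖ ^ e := by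
    rw [mul_sub, h3, mul_one]
  rw [← h4]
  linarith

lemma lower_growth (n : ℕ) (F : ℂ[X]) (hd : F.natDegree = n) (hF : F ≠ 0)
    (hr : ∀ w, F.IsRoot w → ‖w‖ ≤ 1) (m : ℝ) (hm : 0 < m)
    (hmin : ∀ z : ℂ, ‖z‖ = 1 → m ≤ ‖F.eval z‖) :
    m ≤ ‖F.coeff n‖ ∧ ∀ z : ℂ, 1 ≤ ‖z‖ → m * ‖z‖ ^ n ≤ ‖F.eval z‖ := by
  set q := F.reflect n with hq
  have hq0 : q.eval 0 = F.coeff n := by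
    rw [← coeff_zero_eq_eval_zero, hq, coeff_reflect, revAt_le (Nat.zero_le _), Nat.sub_zero]
  have hlead : F.coeff n ≠ 0 := by rw [← hd]; exact leadingCoeff_ne_zero.2 hF
  have hqx : ∀ x : ℂ, x ≠ 0 → q.eval x = F.eval x⁻¹ * x ^ n := by
    intro x hx
    have := reflect_eval n F hd.le x⁻¹ (inv_ne_zero hx)
    rw [inv_inv] at this
    rw [← this, hq, inv_pow]
    field_simp
  have hne : ∀ x : ℂ, ‖x‖ ≤ 1 → q.eval x ≠ 0 := by
    intro x hx h0
    by_cases hx0 : x = 0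
    · rw [hx0, hq0] at h0; exact hlead h0
    · rw [hqx x hx0, mul_eq_zero, or_iff_left (pow_ne_zero _ hx0)] at h0
      have h1 := hr _ h0
      rw [norm_inv] at h1
      have h2 : 1 ≤ ‖x‖ := (inv_le_one₀ (norm_pos_iff.2 hx0)).1 h1
      have h3 := hmin x⁻¹ (by rw [norm_inv, le_antisymm hx h2, inv_one])
      rw [h0, norm_zero] at h3
      linarith
  have hmax : ∀ x : ℂ, ‖x‖ ≤ 1 → m ≤ ‖q.eval x‖ := by
    intro x hx
    have hdc : DiffContOnCl ℂ (fun y => (q.eval y)⁻¹) (ball (0 : ℂ) 1) := by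
      apply DifferentiableOn.diffContOnCl
      rw [closure_ball _ one_ne_zero]
      intro y hy
      exact (q.differentiable.differentiableAt.inv
        (hne y (by simpa using hy))).differentiableWithinAt
    have := Complex.norm_le_of_forall_mem_frontier_norm_le (C := m⁻¹) isBounded_ball hdc (by
      intro y hy
      rw [frontier_ball _ one_ne_zero] at hy
      have hy1 : ‖y‖ = 1 := by simpa using hy
      have hy0 : y ≠ 0 := by rintro rfl; simp at hy1
      have h2 := hmin y⁻¹ (by rw [norm_inv, hy1, inv_one])
      rw [norm_inv, hqx y hy0, norm_mul, norm_pow, hy1, one_pow, mul_one]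
      exact inv_anti₀ hm h2) (z := x) (by
        rw [closure_ball _ one_ne_zero]; simpa using hx)
    rw [norm_inv] at this
    exact (inv_le_inv₀ (norm_pos_iff.2 (hne x hx)) hm).1 this
  refine ⟨by rw [← hq0]; exact hmax 0 (by simp), ?_⟩
  intro z hz
  have hz0 : z ≠ 0 := by rintro rfl; simp at hz; linarith
  have h1 := reflect_eval n F hd.le z hz0
  have h2 := hmax z⁻¹ (by rw [norm_inv]; exact inv_le_one_of_one_le₀ hz)
  rw [← h1, norm_mul, norm_pow]
  gcongr

lemma perturb (n : ℕ) (F : ℂ[X]) (hd : F.natDegree = n) (hF : F ≠ 0)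
    (hr : ∀ w, F.IsRoot w → ‖w‖ ≤ 1) (m : ℝ)
    (hmin : ∀ z : ℂ, ‖z‖ = 1 → m ≤ ‖F.eval z‖) (μ : ℂ) (hμ : μ = 0 ∨ ‖μ‖ < m) :
    (F + C μ * X ^ n).natDegree = n ∧ ∀ w, (F + C μ * X ^ n).IsRoot w → ‖w‖ ≤ 1 := by
  rcases hμ with rfl | hμ
  · simpa using ⟨hd, hr⟩
  have hm : 0 < m := (norm_nonneg μ).trans_lt hμ
  obtain ⟨h1, h2⟩ := lower_growth n F hd hF hr m hm hmin
  constructor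
  · apply natDegree_eq_of_le_of_coeff_ne_zero
    · exact (natDegree_add_le _ _).trans (max_le hd.le (natDegree_C_mul_X_pow_le _ _))
    · simp only [coeff_add, coeff_C_mul, coeff_X_pow, if_true, mul_one]
      intro h
      have : ‖F.coeff n‖ = ‖μ‖ := by rw [eq_neg_of_add_eq_zero_left h, norm_neg]
      linarith
  · intro w hw
    by_contra! h
    have h3 := h2 w h.le
    have h4 : F.eval w + μ * w ^ n = 0 := by simpa [IsRoot] using hw
    rw [eq_neg_of_add_eq_zero_left h4, norm_neg, norm_mul, norm_pow] at h3
    have : 0 < ‖w‖ ^ n := by positivity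
    nlinarith

lemma eval_pert (n : ℕ) (F : ℂ[X]) (μ z : ℂ) :
    (F + C μ * X ^ n).eval z = F.eval z + μ * z ^ n ∧
    (F + C μ * X ^ n).derivative.eval z = F.derivative.eval z + n * μ * z ^ (n - 1) ∧
    (n ≠ 0 → n * (F + C μ * X ^ n).eval z - z * (F + C μ * X ^ n).derivative.eval z =
      n * F.eval z - z * F.derivative.eval z) := by
  have h1 : (F + C μ * X ^ n).eval z = F.eval z + μ * z ^ n := by simp
  have h2 : (F + C μ * X ^ n).derivative.eval z =
      F.derivative.eval z + n * μ * z ^ (n - 1) := by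
    simp [derivative_X_pow]; ring
  refine ⟨h1, h2, ?_⟩
  intro hn
  rw [h1, h2]
  obtain ⟨d, rfl⟩ := Nat.exists_eq_succ_of_ne_zero hn
  simp [pow_succ]
  ring

lemma exists_unit (a : ℂ) : ∃ u : ℂ, ‖u‖ = 1 ∧ a = u * ‖a‖ := by
  by_cases h0 : a = 0
  · exact ⟨1, by simp, by simp [h0]⟩
  · have : (‖a‖ : ℂ) ≠ 0 := by simpa using h0
    exact ⟨a / ‖a‖, by simp [h0], by field_simp⟩

lemma min_der (n : ℕ) (hn : n ≠ 0) (F : ℂ[X]) (hd : F.natDegree = n) (hF : F ≠ 0)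
    (hr : ∀ w, F.IsRoot w → ‖w‖ ≤ 1) (m : ℝ) 
    (hmin : ∀ z : ℂ, ‖z‖ = 1 → m ≤ ‖F.eval z‖) (z : ℂ) (hz : ‖z‖ = 1) :
    n * m ≤ ‖F.derivative.eval z‖ := by
  by_contra! h
  have hz0 : z ≠ 0 := by rintro rfl; simp at hz
  have hn' : (n : ℂ) ≠ 0 := by exact_mod_cast hn
  have hnp : (0:ℝ) < n := by exact_mod_cast Nat.pos_of_ne_zero hn
  set μ := - F.derivative.eval z / (n * z ^ (n - 1)) with hμ
  have hμn : ‖μ‖ < m := by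
    rw [hμ, norm_div, norm_neg, norm_mul, norm_pow, hz, one_pow, mul_one, Complex.norm_natCast,
      div_lt_iff₀ hnp]; linarith
  obtain ⟨h1, h2⟩ := perturb n F hd hF hr m hmin μ (Or.inr hμn)
  have h3 := K1 n _ h1 h2 z hz
  obtain ⟨e1, e2, e3⟩ := eval_pert n F μ z
  have e4 : (F + C μ * X ^ n).derivative.eval z = 0 := by
    rw [e2, hμ]; field_simp; ring
  rw [e4, norm_zero, e1, mul_zero, sub_zero, norm_mul, Complex.norm_natCast] at h3
  have h5 := norm_sub_norm_le (F.eval z) (-(μ * z ^ n))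
  rw [sub_neg_eq_add, norm_neg, norm_mul, norm_pow, hz, one_pow, mul_one] at h5
  have h6 := hmin z hz
  nlinarith

lemma min_both (n : ℕ) (hn : n ≠ 0) (F : ℂ[X]) (hd : F.natDegree = n) (hF : F ≠ 0)
    (hr : ∀ w, F.IsRoot w → ‖w‖ ≤ 1) (m : ℝ) 
    (hmin : ∀ z : ℂ, ‖z‖ = 1 → m ≤ ‖F.eval z‖) (t : ℝ) (ht0 : 0 ≤ t) (ht : t = 0 ∨ t < m)
    (z : ℂ) (hz : ‖z‖ = 1) :
    ‖n * F.eval z - z * F.derivative.eval z‖ ≤ ‖F.derivative.eval z‖ - n * t ∧ 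
    ((n : ℝ) + (‖F.coeff n‖ - t - ‖F.coeff 0‖) / (‖F.coeff n‖ - t + ‖F.coeff 0‖)) / 2 *
      (‖F.eval z‖ - t) ≤ ‖F.derivative.eval z‖ - n * t := by
  have hnp : (0:ℝ) < n := by exact_mod_cast Nat.pos_of_ne_zero hn
  have hz0 : z ≠ 0 := by rintro rfl; simp at hz
  have hlead : 0 < ‖F.coeff n‖ := by
    rw [← hd]; exact norm_pos_iff.2 (leadingCoeff_ne_zero.2 hF)
  have hnt : n * t ≤ ‖F.derivative.eval z‖ := by
    rcases ht with h | h
    · rw [h]; simp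
    · exact le_trans (by gcongr) (min_der n hn F hd hF hr m hmin z hz)
  have htl : t < ‖F.coeff n‖ := by
    rcases ht with h | h
    · rw [h]; exact hlead
    · exact h.trans_le (lower_growth n F hd hF hr m (by linarith) hmin).1
  have htz : t ≤ ‖F.eval z‖ := by
    rcases ht with h | h
    · rw [h]; simp
    · exact h.le.trans (hmin z hz)
  obtain ⟨u, hu, hau⟩ := exists_unit (F.derivative.eval z)
  set μ := - u * t / z ^ (n - 1) with hμ
  have hμn : ‖μ‖ = t := by
    rw [hμ, norm_div, norm_mul, norm_neg, norm_pow, hz, hu, Complex.norm_real,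
      Real.norm_of_nonneg ht0]; simp
  obtain ⟨h1, h2⟩ := perturb n F hd hF hr m hmin μ (by
    rcases ht with h | h
    · left; rw [← norm_eq_zero, hμn, h]
    · right; rw [hμn]; exact h)
  obtain ⟨e1, e2, e3⟩ := eval_pert n F μ z
  have e4 : ‖(F + C μ * X ^ n).derivative.eval z‖ = ‖F.derivative.eval z‖ - n * t := by
    have : F.derivative.eval z + n * μ * z ^ (n - 1)
        = u * ((‖F.derivative.eval z‖ - n * t : ℝ) : ℂ) := by
      conv_lhs => rw [hau]
      rw [hμ]; push_cast; field_simp; ring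
    rw [e2, this, norm_mul, hu, one_mul, Complex.norm_real, Real.norm_of_nonneg (by linarith)]
  constructor
  · rw [← e3 hn, ← e4]
    exact K1 n _ h1 h2 z hz
  · rw [← e4]
    refine le_trans ?_ (K2 n _ h1 h2 z hz)
    have c0 : (F + C μ * X ^ n).coeff 0 = F.coeff 0 := by
      simp [coeff_X_pow, Ne.symm hn]
    have cn : (F + C μ * X ^ n).coeff n = F.coeff n + μ := by simp
    have hcn : ‖F.coeff n‖ - t ≤ ‖F.coeff n + μ‖ := by
      have := norm_sub_norm_le (F.coeff n) (-μ)
      rwa [norm_neg, hμn, sub_neg_eq_add] at this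
    have hev : ‖F.eval z‖ - t ≤ ‖(F + C μ * X ^ n).eval z‖ := by
      have := norm_sub_norm_le (F.eval z) (-(μ * z ^ n))
      rwa [sub_neg_eq_add, norm_neg, norm_mul, norm_pow, hz, one_pow, mul_one, hμn, ← e1] at this
    rw [c0, cn]
    have c0n := norm_nonneg (F.coeff 0)
    have hfrac : ∀ a b c : ℝ, 0 < a → a ≤ b → 0 ≤ c → (a - c) / (a + c) ≤ (b - c) / (b + c) := by
      intro a b c ha hab hc
      rw [div_le_div_iff₀ (by linarith) (by linarith)]
      nlinarith
    have h7 := hfrac (‖F.coeff n‖ - t) ‖F.coeff n + μ‖ ‖F.coeff 0‖ (by linarith) hcn c0n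
    have h8 : -1 ≤ (‖F.coeff n‖ - t - ‖F.coeff 0‖) / (‖F.coeff n‖ - t + ‖F.coeff 0‖) := by
      rw [le_div_iff₀ (by linarith)]; linarith
    have h9 : (1:ℝ) ≤ n := by exact_mod_cast Nat.one_le_iff_ne_zero.2 hn
    apply mul_le_mul
    · linarith
    · exact hev
    · linarith
    · linarith

lemma upper (e : ℕ) (F : ℂ[X]) (hd : F.natDegree ≤ e + 2) (M : ℝ)
    (hM : ∀ z : ℂ, ‖z‖ = 1 → ‖F.eval z‖ ≤ M) (z : ℂ) (hz : ‖z‖ = 1) :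
    ‖F.derivative.eval z‖ + ‖((e + 2 : ℕ) : ℂ) * F.eval z - z * F.derivative.eval z‖
      ≤ ((e + 2 : ℕ) : ℝ) * M := by
  set n := e + 2 with hn
  have hn0 : n ≠ 0 := by omega
  have hn' : (n : ℂ) ≠ 0 := by exact_mod_cast hn0
  have hnp : (0:ℝ) < n := by exact_mod_cast Nat.pos_of_ne_zero hn0
  have hz0 : z ≠ 0 := by rintro rfl; simp at hz
  have hM0 : 0 ≤ M := (norm_nonneg _).trans (hM z hz)
  have hlead : ‖F.coeff n‖ ≤ M := by
    have := quad2 e F hd M hM 0 (by simp)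
    have h2 := norm_nonneg (F.eval 0)
    simp only [norm_zero] at this
    rw [hn]; linarith
  have hpert : ∀ μ : ℂ, M < ‖μ‖ → (F + C μ * X ^ n).natDegree = n ∧
      ∀ w, (F + C μ * X ^ n).IsRoot w → ‖w‖ ≤ 1 := by
    intro μ hμ
    constructor
    · apply natDegree_eq_of_le_of_coeff_ne_zero
      · exact (natDegree_add_le _ _).trans (max_le hd (natDegree_C_mul_X_pow_le _ _))
      · simp only [coeff_add, coeff_C_mul, coeff_X_pow, if_true, mul_one]
        intro h
        have : ‖F.coeff n‖ = ‖μ‖ := by rw [eq_neg_of_add_eq_zero_left h, norm_neg]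
        linarith
    · intro w hw
      by_contra! h
      have h3 := frr e F hd M hM w h.le
      have h4 : F.eval w + μ * w ^ n = 0 := by simpa [IsRoot] using hw
      rw [eq_neg_of_add_eq_zero_left h4, norm_neg, norm_mul, norm_pow, ← hn] at h3
      have h5 : 0 < ‖w‖ ^ n := by positivity
      have h6 : ‖w‖ ^ e ≤ ‖w‖ ^ n := pow_le_pow_right₀ h.le (by omega)
      have h7 := mul_nonneg (sub_nonneg.2 h6) (norm_nonneg (F.coeff 0))
      nlinarith
  refine le_of_forall_gt_imp_ge_of_dense ?_
  intro y hy
  obtain ⟨M', rfl⟩ : ∃ M', y = n * M' := ⟨y / n, by field_simp⟩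
  have hMM : M < M' := lt_of_mul_lt_mul_left hy hnp.le
  have hder : ‖F.derivative.eval z‖ ≤ n * M' := by
    by_contra! h
    set μ := - F.derivative.eval z / (n * z ^ (n - 1)) with hμ
    have hμn : M' < ‖μ‖ := by
      rw [hμ, norm_div, norm_neg, norm_mul, norm_pow, hz, one_pow, mul_one, Complex.norm_natCast,
        lt_div_iff₀ hnp]; linarith
    obtain ⟨h1, h2⟩ := hpert μ (by linarith)
    have h3 := K1 n _ h1 h2 z hz
    obtain ⟨e1, e2, e3⟩ := eval_pert n F μ z
    have e4 : (F + C μ * X ^ n).derivative.eval z = 0 := by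
      rw [e2, hμ]; field_simp; ring
    rw [e4, norm_zero, e1, mul_zero, sub_zero, norm_mul, Complex.norm_natCast] at h3
    have h5 := norm_sub_norm_le (-(μ * z ^ n)) (F.eval z)
    have h55 : -(μ * z ^ n) - F.eval z = -(F.eval z + μ * z ^ n) := by ring
    rw [h55, norm_neg, norm_neg, norm_mul, norm_pow, hz, one_pow, mul_one] at h5
    have h6 := hM z hz
    nlinarith
  obtain ⟨u, hu, hau⟩ := exists_unit (F.derivative.eval z)
  set μ := - u * M' / z ^ (n - 1) with hμ
  have hμn : ‖μ‖ = M' := by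
    rw [hμ, norm_div, norm_mul, norm_neg, norm_pow, hz, hu, Complex.norm_real,
      Real.norm_of_nonneg (by linarith)]; simp
  obtain ⟨h1, h2⟩ := hpert μ (by rw [hμn]; exact hMM)
  obtain ⟨e1, e2, e3⟩ := eval_pert n F μ z
  have e4 : ‖(F + C μ * X ^ n).derivative.eval z‖ = n * M' - ‖F.derivative.eval z‖ := by
    have : F.derivative.eval z + n * μ * z ^ (n - 1)
        = - u * ((n * M' - ‖F.derivative.eval z‖ : ℝ) : ℂ) := by
      conv_lhs => rw [hau]
      rw [hμ]; push_cast; field_simp; ring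
    rw [e2, this, norm_mul, norm_neg, hu, one_mul, Complex.norm_real,
      Real.norm_of_nonneg (by linarith)]
  have := K1 n _ h1 h2 z hz
  rw [e3 hn0, e4] at this
  linarith

lemma reflect_der (n : ℕ) (F : ℂ[X]) (hd : F.natDegree ≤ n) (x : ℂ) (hx : ‖x‖ = 1) :
    ‖(F.reflect n).derivative.eval x‖ =
      ‖n * F.eval x⁻¹ - x⁻¹ * F.derivative.eval x⁻¹‖ := by
  have hx0 : x ≠ 0 := by rintro rfl; simp at hx
  have h1 : HasDerivAt (fun y => (F.reflect n).eval y) ((F.reflect n).derivative.eval x) x :=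
    (F.reflect n).hasDerivAt x
  have h2 : HasDerivAt (fun y : ℂ => y ^ n * F.eval y⁻¹)
      (n * x ^ (n - 1) * F.eval x⁻¹ + x ^ n * (F.derivative.eval x⁻¹ * (-(x ^ 2)⁻¹))) x :=
    (hasDerivAt_pow n x).mul ((F.hasDerivAt x⁻¹).comp x (hasDerivAt_inv hx0))
  have h3 : (fun y => (F.reflect n).eval y) =ᶠ[nhds x] (fun y : ℂ => y ^ n * F.eval y⁻¹) := by
    filter_upwards [isOpen_ne.mem_nhds hx0] with y hy
    have := reflect_eval n F hd y⁻¹ (inv_ne_zero hy)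
    rw [inv_inv] at this
    have hy' : y ≠ 0 := hy
    rw [← this, inv_pow]
    field_simp
  have h4 := h1.unique (h2.congr_of_eventuallyEq h3)
  have h5 : x * (F.reflect n).derivative.eval x =
      x ^ n * (n * F.eval x⁻¹ - x⁻¹ * F.derivative.eval x⁻¹) := by
    rw [h4]
    rcases n with _ | d
    · simp; field_simp
    · simp [pow_succ]; field_simp; ring
  have h6 := congrArg norm h5
  rw [norm_mul, norm_mul, norm_pow, hx, one_pow, one_mul, one_mul] at h6
  exact h6

lemma ar (e : ℕ) (F : ℂ[X]) (hd : F.natDegree ≤ e + 3) (M E : ℝ)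
    (hM : ∀ z : ℂ, ‖z‖ = 1 → ‖F.eval z‖ ≤ M)
    (hE : ∀ z : ℂ, ‖z‖ = 1 →
      ‖((e + 3 : ℕ) : ℂ) * F.eval z - z * F.derivative.eval z‖ ≤ E)
    (R : ℝ) (hR : 1 ≤ R) (u : ℂ) (hu : ‖u‖ = 1) :
    ‖(F.reflect (e + 3)).eval (u * R)‖ ≤ M + (R ^ (e + 3) - 1) / (e + 3) * E
      - ((R ^ (e + 3) - 1) / (e + 3) - (R ^ (e + 1) - 1) / (e + 1)) * ‖F.coeff (e + 2)‖ := by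
  set G := F.reflect (e + 3) with hG
  have hGd : G.natDegree ≤ e + 3 := natDegree_reflect_le.trans (by simp [hd])
  have hGdd : G.derivative.natDegree ≤ e + 2 := (natDegree_derivative_le G).trans (by omega)
  have hG0 : G.derivative.coeff 0 = F.coeff (e + 2) := by
    rw [coeff_derivative, hG, coeff_reflect, revAt_le (by omega)]
    simp
  have hGE : ∀ z : ℂ, ‖z‖ = 1 → ‖G.derivative.eval z‖ ≤ E := by
    intro z hz
    rw [hG, reflect_der _ F hd z hz]
    exact hE z⁻¹ (by rw [norm_inv, hz, inv_one])
  have hGM : ‖G.eval u‖ ≤ M := by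
    have hu0 : u ≠ 0 := by rintro rfl; simp at hu
    have h1 := reflect_eval (e + 3) F hd u⁻¹ (inv_ne_zero hu0)
    have h2 := hM u⁻¹ (by simp [hu])
    rw [← h1] at h2
    simpa [hu] using h2
  have hder : ∀ x : ℝ, HasDerivAt (fun t : ℝ => G.eval (u * (t : ℂ)))
      (G.derivative.eval (u * x) * (u * 1)) x := by
    intro x
    have h1 : HasDerivAt (fun t : ℝ => u * (t : ℂ)) (u * 1) x :=
      (Complex.ofRealCLM.hasDerivAt (x := x)).const_mul u
    exact (G.hasDerivAt (u * x)).comp x h1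
  set c := ‖F.coeff (e + 2)‖ with hc
  have he3 : ((e : ℝ) + 3) ≠ 0 := by positivity
  have he1 : ((e : ℝ) + 1) ≠ 0 := by positivity
  have := image_norm_le_of_norm_deriv_right_le_deriv_boundary
    (f := fun t : ℝ => G.eval (u * (t : ℂ)))
    (f' := fun x : ℝ => G.derivative.eval (u * x) * (u * 1))
    (a := 1) (b := R)
    (B := fun t => M + (t ^ (e + 3) - 1) / (e + 3) * E
      - ((t ^ (e + 3) - 1) / (e + 3) - (t ^ (e + 1) - 1) / (e + 1)) * c)
    (B' := fun t => t ^ (e + 2) * E - (t ^ (e + 2) - t ^ e) * c)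
    (fun x _ => (hder x).continuousAt.continuousWithinAt)
    (fun x _ => (hder x).hasDerivWithinAt)
    (by simpa using hGM)
    (by
      intro x
      have h1 : HasDerivAt (fun t : ℝ => (t ^ (e + 3) - 1) / ((e : ℝ) + 3)) (x ^ (e + 2)) x := by
        have := ((hasDerivAt_pow (e + 3) x).sub_const 1).div_const ((e : ℝ) + 3)
        have hx : ((e + 3 : ℕ) : ℝ) * x ^ (e + 3 - 1) / ((e : ℝ) + 3) = x ^ (e + 2) := by
          rw [div_eq_iff he3, Nat.add_sub_assoc (by norm_num)]; push_cast; ring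
        rw [hx] at this
        exact this
      have h2 : HasDerivAt (fun t : ℝ => (t ^ (e + 1) - 1) / ((e : ℝ) + 1)) (x ^ e) x := by
        have := ((hasDerivAt_pow (e + 1) x).sub_const 1).div_const ((e : ℝ) + 1)
        have hx : ((e + 1 : ℕ) : ℝ) * x ^ (e + 1 - 1) / ((e : ℝ) + 1) = x ^ (e) := by
          rw [div_eq_iff he1, Nat.add_sub_assoc (by norm_num)]; push_cast; ring
        rw [hx] at this
        exact this
      exact ((h1.mul_const E).const_add M).sub ((h1.sub h2).mul_const c))
    (by
      intro x hx
      have hx0 : ‖u * (x : ℂ)‖ = x := by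
        rw [norm_mul, hu, one_mul, Complex.norm_real, Real.norm_of_nonneg (by linarith [hx.1])]
      have := frr e G.derivative hGdd E hGE (u * x) (by rw [hx0]; exact hx.1)
      rw [hx0, hG0] at this
      simpa [hu] using this)
    (x := R) ⟨hR, le_refl R⟩
  exact this

lemma cont_norm (P : ℂ[X]) (r : ℝ) :
    Continuous (fun z : sphere (0 : ℂ) r => ‖P.eval (z : ℂ)‖) :=
  (P.continuous.comp continuous_subtype_val).norm

lemma le_maxMod (P : ℂ[X]) (r : ℝ) (z : ℂ) (hz : ‖z‖ = r) : ‖P.eval z‖ ≤ maxMod P r := by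
  have hc : CompactSpace (sphere (0 : ℂ) r) := isCompact_iff_compactSpace.1 (isCompact_sphere 0 r)
  exact le_ciSup (f := fun z : sphere (0 : ℂ) r => ‖P.eval (z : ℂ)‖)
    (isCompact_range (cont_norm P r)).bddAbove ⟨z, by simpa using hz⟩

lemma exists_maxMod (P : ℂ[X]) (r : ℝ) (hr : 0 ≤ r) :
    ∃ z : ℂ, ‖z‖ = r ∧ ‖P.eval z‖ = maxMod P r := by
  have hne : (sphere (0 : ℂ) r).Nonempty := NormedSpace.sphere_nonempty.2 hr
  obtain ⟨z, hz, hmax⟩ := (isCompact_sphere (0 : ℂ) r).exists_isMaxOn hne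
    (P.continuous.norm.continuousOn)
  have hz' : ‖z‖ = r := by simpa using hz
  refine ⟨z, hz', le_antisymm (le_maxMod P r z hz') ?_⟩
  have : Nonempty (sphere (0 : ℂ) r) := hne.to_subtype
  exact ciSup_le fun w => hmax w.2

lemma minMod_le (P : ℂ[X]) (r : ℝ) (z : ℂ) (hz : ‖z‖ = r) : minMod P r ≤ ‖P.eval z‖ :=
  ciInf_le (f := fun z : sphere (0 : ℂ) r => ‖P.eval (z : ℂ)‖)
    ⟨0, by rintro _ ⟨w, rfl⟩; exact norm_nonneg _⟩ ⟨z, by simpa using hz⟩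

lemma minMod_nonneg (P : ℂ[X]) (r : ℝ) : 0 ≤ minMod P r :=
  Real.iInf_nonneg fun _ => norm_nonneg _

theorem stmt_2 (n : ℕ) (hn : 2 < n) (P : Polynomial ℂ) (hdeg : P.natDegree = n)
    (k : ℝ) (hk : 1 ≤ k) (hroots : ∀ w : ℂ, P.IsRoot w → ‖w‖ ≤ k)
    (m : ℝ) (hm : m = minMod P k) (l : ℝ) (hl0 : 0 ≤ l) (hl1 : l < 1) :
    maxMod (Polynomial.derivative P) 1 ≥
      ((n : ℝ) / (1 + k ^ n)) * (maxMod P 1 + l * m) +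
        (1 - 1 / k ^ 2) * ‖P.coeff 1‖ +
        (1 / (k ^ n * (1 + k ^ n))) *
          (((k ^ n * ‖P.coeff n‖ - l * m - ‖P.coeff 0‖) /
                (k ^ n * ‖P.coeff n‖ - l * m + ‖P.coeff 0‖)) *
              (k ^ n * maxMod P 1 - l * m) +
            k ^ (n - 1) * ‖P.coeff (n - 1)‖ *
              ((k ^ n - 1) / (n : ℝ) - (k ^ (n - 2) - 1) / ((n : ℝ) - 2)) *
              ((n : ℝ) +
                (k ^ n * ‖P.coeff n‖ - l * m - ‖P.coeff 0‖) /
                  (k ^ n * ‖P.coeff n‖ - l * m + ‖P.coeff 0‖))) := by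
  obtain ⟨e, rfl⟩ : ∃ e, n = e + 3 := ⟨n - 3, by omega⟩
  have hkp : 0 < k := by linarith
  have hkC : (k : ℂ) ≠ 0 := Complex.ofReal_ne_zero.2 hkp.ne'
  have hkn : ‖(k : ℂ)‖ = k := by rw [Complex.norm_real, Real.norm_of_nonneg hkp.le]
  have hP0 : P ≠ 0 := by rintro rfl; simp at hdeg
  set F : ℂ[X] := P.comp (C (k : ℂ) * X) with hF
  have hFe : ∀ z, F.eval z = P.eval (k * z) := by intro z; simp [hF]
  have hFd : ∀ z, F.derivative.eval z = k * P.derivative.eval (k * z) := by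
    intro z; rw [hF, derivative_comp]; simp
  have hFc : ∀ j, ‖F.coeff j‖ = k ^ j * ‖P.coeff j‖ := by
    intro j; rw [hF, comp_C_mul_X_coeff, norm_mul, norm_pow, hkn, mul_comm]
  have hlead : P.coeff (e + 3) ≠ 0 := by rw [← hdeg]; exact leadingCoeff_ne_zero.2 hP0
  have hFn : F.natDegree = e + 3 := by
    apply natDegree_eq_of_le_of_coeff_ne_zero
    · rw [natDegree_le_iff_coeff_eq_zero]
      intro j hj
      rw [hF, comp_C_mul_X_coeff, coeff_eq_zero_of_natDegree_lt (by omega), zero_mul]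
    · rw [hF, comp_C_mul_X_coeff]
      exact mul_ne_zero hlead (pow_ne_zero _ hkC)
  have hF0 : F ≠ 0 := by intro h; rw [h] at hFn; simp at hFn
  have hFr : ∀ w, F.IsRoot w → ‖w‖ ≤ 1 := by
    intro w hw
    have h1 : P.eval (k * w) = 0 := by rw [← hFe]; exact hw
    have h2 := hroots _ h1
    rw [norm_mul, hkn] at h2
    nlinarith
  set M := maxMod P k with hM
  set t := l * m with ht
  have hm0 : 0 ≤ m := by rw [hm]; exact minMod_nonneg P k
  have ht0 : 0 ≤ t := mul_nonneg hl0 hm0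
  have htm : t = 0 ∨ t < m := by
    rcases hm0.eq_or_lt with h | h
    · left; rw [ht, ← h, mul_zero]
    · right; rw [ht]; nlinarith
  have hkz : ∀ z : ℂ, ‖z‖ = 1 → ‖(k : ℂ) * z‖ = k := by
    intro z hz; rw [norm_mul, hkn, hz, mul_one]
  have hmin : ∀ z : ℂ, ‖z‖ = 1 → m ≤ ‖F.eval z‖ := by
    intro z hz
    rw [hFe, hm]; exact minMod_le P k _ (hkz z hz)
  have hmax : ∀ z : ℂ, ‖z‖ = 1 → ‖F.eval z‖ ≤ M := by
    intro z hz
    rw [hFe]; exact le_maxMod P k _ (hkz z hz)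
  have hboth := min_both (e + 3) (by omega) F hFn hF0 hFr m hmin t ht0 htm
  -- Erdős–Lax type bound
  have hE : ∀ z : ℂ, ‖z‖ = 1 → ‖((e + 3 : ℕ) : ℂ) * F.eval z - z * F.derivative.eval z‖
      ≤ ((e + 3 : ℕ) : ℝ) * (M - t) / 2 := by
    intro z hz
    have h1 := (hboth z hz).1
    have h2 := upper (e + 1) F hFn.le M hmax z hz
    linarith
  -- growth
  obtain ⟨z1, hz1, hz1M⟩ := exists_maxMod P 1 zero_le_one
  have hB : k ^ (e + 3) * maxMod P 1 ≤ M +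
      (k ^ (e + 3) - 1) / (e + 3) * (((e + 3 : ℕ) : ℝ) * (M - t) / 2)
      - ((k ^ (e + 3) - 1) / (e + 3) - (k ^ (e + 1) - 1) / (e + 1)) * ‖F.coeff (e + 2)‖ := by
    have hz10 : z1 ≠ 0 := by rintro rfl; simp at hz1
    have h1 := ar e F hFn.le M _ hmax hE k hk z1⁻¹ (by rw [norm_inv, hz1, inv_one])
    have h2 := reflect_eval (e + 3) F hFn.le (z1 / k) (div_ne_zero hz10 hkC)
    have h3 : (z1 / k)⁻¹ = z1⁻¹ * k := by field_simp
    have h4 : (k : ℂ) * (z1 / k) = z1 := by field_simp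
    rw [h3, hFe, h4] at h2
    have h5 := congrArg norm h2
    rw [norm_mul, hz1M, norm_pow, norm_div, hz1, hkn] at h5
    rw [← h5]
    refine le_trans (le_of_eq ?_) h1
    rw [one_div, inv_pow]
    field_simp
  -- lower bound for the derivative on the circle of radius k
  obtain ⟨z0, hz0, hz0M⟩ := exists_maxMod P k hkp.le
  have hA := (hboth (z0 / k) (by rw [norm_div, hz0, hkn]; field_simp)).2
  have hzk : (k : ℂ) * (z0 / k) = z0 := by field_simp
  rw [hFe, hFd, hzk, norm_mul, hkn, hz0M, hFc, hFc, pow_zero, one_mul] at hA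
  have hC := frr e P.derivative ((natDegree_derivative_le P).trans (by omega))
    (maxMod P.derivative 1) (fun z hz => le_maxMod _ _ z hz) z0 (by rw [hz0]; exact hk)
  rw [hz0, coeff_derivative] at hC
  simp only [zero_add, Nat.cast_zero, mul_one] at hC
  rw [hFc] at hB
  simp only [show e + 3 - 1 = e + 2 from rfl, show e + 3 - 2 = e + 1 from rfl]
  have hlt : t < k ^ (e + 3) * ‖P.coeff (e + 3)‖ := by
    rw [← hFc]
    rcases htm with h | h
    · rw [h, hFc]
      exact mul_pos (by positivity) (norm_pos_iff.2 hlead)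
    · exact h.trans_le (lower_growth _ F hFn hF0 hFr m (by linarith) hmin).1
  have hs : -1 ≤ (k ^ (e + 3) * ‖P.coeff (e + 3)‖ - t - ‖P.coeff 0‖) /
      (k ^ (e + 3) * ‖P.coeff (e + 3)‖ - t + ‖P.coeff 0‖) := by
    have := norm_nonneg (P.coeff 0)
    rw [le_div_iff₀ (by linarith)]; linarith
  generalize (k ^ (e + 3) * ‖P.coeff (e + 3)‖ - t - ‖P.coeff 0‖) /
      (k ^ (e + 3) * ‖P.coeff (e + 3)‖ - t + ‖P.coeff 0‖) = s at hA hs ⊢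
  have hn2 : ((e + 3 : ℕ) : ℝ) - 2 = e + 1 := by push_cast; ring
  have hn3 : ((e + 3 : ℕ) : ℝ) = e + 3 := by push_cast; ring
  rw [hn2, hn3]
  rw [hn3] at hA hB
  rw [← hM] at hA
  have he0 : (0 : ℝ) ≤ e := Nat.cast_nonneg e
  set ψ := (k ^ (e + 3) - 1) / ((e : ℝ) + 3) - (k ^ (e + 1) - 1) / ((e : ℝ) + 1) with hψ
  have hB' : (k ^ (e + 3) - 1) / ((e : ℝ) + 3) * (((e : ℝ) + 3) * (M - t) / 2) =
      (k ^ (e + 3) - 1) * (M - t) / 2 := by field_simp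
  rw [hB'] at hB
  set D := maxMod P.derivative 1 - (1 - 1 / k ^ 2) * ‖P.coeff 1‖ with hD
  have hC' : k * ‖P.derivative.eval z0‖ ≤ k ^ (e + 3) * D := by
    have h1 := mul_le_mul_of_nonneg_left hC hkp.le
    refine h1.trans (le_of_eq ?_)
    rw [hD]; field_simp; ring
  set K := k ^ (e + 3) with hK
  have hKp : 0 < K := by positivity
  set c := k ^ (e + 2) * ‖P.coeff (e + 2)‖ with hc
  set Q := maxMod P 1 with hQ
  have key : ((e : ℝ) + 3) * K * (Q + t) + (s * (K * Q - t) + c * ψ * ((e : ℝ) + 3 + s))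
      ≤ K * (1 + K) * D := by
    have h1 : (1 + K) * (((e : ℝ) + 3 + s) / 2 * (M - t) + (e + 3) * t) ≤ (1 + K) * (K * D) := by
      apply mul_le_mul_of_nonneg_left _ (by positivity)
      linarith
    have h2 : 0 ≤ ((e : ℝ) + 3 + s) * ((M + (K - 1) * (M - t) / 2 - ψ * c) - K * Q) :=
      mul_nonneg (by linarith) (by linarith)
    nlinarith
  have : ((e : ℝ) + 3) / (1 + K) * (Q + t) +
      1 / (K * (1 + K)) * (s * (K * Q - t) + c * ψ * ((e : ℝ) + 3 + s)) ≤ D := by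
    have e1 : ((e : ℝ) + 3) / (1 + K) * (Q + t) +
      1 / (K * (1 + K)) * (s * (K * Q - t) + c * ψ * ((e : ℝ) + 3 + s)) =
      (((e : ℝ) + 3) * K * (Q + t) + (s * (K * Q - t) + c * ψ * ((e : ℝ) + 3 + s))) /
        (K * (1 + K)) := by field_simp
    rw [e1, div_le_iff₀ (by positivity)]
    linarith
  rw [ge_iff_le]
  linarith
end

section
/- (Aziz–Dawood inequality) Let P be a complex polynomial of degree n ≥ 1 all of whose zeros lie in |z| ≤ 1. Then max_{|z|=1}|P′(z)| ≥ (n/2)·( max_{|z|=1}|P(z)| + min_{|z|=1}|P(z)| ). -/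
open Polynomial Metric

lemma reverse_eval (P : ℂ[X]) (u : ℂ) (hu : u ≠ 0) :
    P.reverse.eval u⁻¹ * u ^ P.natDegree = P.eval u := by
  letI := invertibleOfNonzero hu
  have := eval₂_reverse_mul_pow (RingHom.id ℂ) u P
  rw [invOf_eq_inv] at this
  exact this

lemma aux_re (z w : ℂ) (hz : ‖z‖ = 1) (hw : ‖w‖ ≤ 1) (hne : z - w ≠ 0) :
    (1 / 2 : ℝ) ≤ (z * (1 / (z - w))).re := by
  have h0 : 0 < Complex.normSq (z - w) := Complex.normSq_pos.mpr hne
  have h1 : Complex.normSq z = 1 := by rw [Complex.normSq_eq_norm_sq, hz]; norm_num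
  have h2 : Complex.normSq w ≤ 1 := by
    rw [Complex.normSq_eq_norm_sq]; nlinarith [norm_nonneg w]
  rw [mul_one_div, Complex.div_re, ← add_div, le_div_iff₀ h0]
  simp only [Complex.normSq_apply, Complex.sub_re, Complex.sub_im] at *
  nlinarith

lemma turan (P : ℂ[X]) (hroots : ∀ w : ℂ, P.IsRoot w → ‖w‖ ≤ 1) (z : ℂ) (hz : ‖z‖ = 1) :
    (P.natDegree : ℝ) / 2 * ‖P.eval z‖ ≤ ‖P.derivative.eval z‖ := by
  by_cases h : P.eval z = 0
  · simp [h]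
  have hs : P.Splits := IsAlgClosed.splits P
  have hP : P ≠ 0 := by rintro rfl; simp at h
  have e := hs.eval_derivative_div_eval_of_ne_zero h
  have key : ∀ s : Multiset ℂ, (∀ w ∈ s, ‖w‖ ≤ 1 ∧ z - w ≠ 0) →
      (s.card : ℝ) / 2 ≤ (z * (s.map fun w => 1 / (z - w)).sum).re := by
    intro s
    induction s using Multiset.induction_on with
    | empty => simp
    | cons a s ih =>
      intro hh
      have i1 := ih (fun w hw => hh w (Multiset.mem_cons_of_mem hw))
      obtain ⟨i2, i3⟩ := hh a (Multiset.mem_cons_self a s)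
      have i4 := aux_re z a hz i2 i3
      rw [Multiset.map_cons, Multiset.sum_cons, mul_add, Complex.add_re, Multiset.card_cons]
      push_cast
      linarith
  have k := key P.roots (fun w hw => by
    have hw' := (mem_roots hP).1 hw
    refine ⟨hroots w hw', fun h0 => h ?_⟩
    rw [sub_eq_zero.1 h0]; exact hw')
  rw [← e, ← hs.natDegree_eq_card_roots] at k
  have k2 := k.trans (Complex.re_le_norm _)
  rw [norm_mul, hz, one_mul, norm_div, le_div_iff₀ (norm_pos_iff.2 h)] at k2
  exact k2

lemma reverse_lower (P : ℂ[X]) (hroots : ∀ w : ℂ, P.IsRoot w → ‖w‖ ≤ 1) (m : ℝ) (hm : 0 < m)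
    (hP : ∀ z : ℂ, ‖z‖ = 1 → m ≤ ‖P.eval z‖) (z : ℂ) (hz : ‖z‖ ≤ 1) :
    m ≤ ‖P.reverse.eval z‖ := by
  have hP0 : P ≠ 0 := by
    rintro rfl
    have := hP 1 (by simp)
    simp at this; linarith
  have hev : ∀ u : ℂ, u ≠ 0 → P.reverse.eval u = P.eval u⁻¹ * u ^ P.natDegree := by
    intro u hu
    rw [← reverse_eval P u⁻¹ (inv_ne_zero hu), inv_inv, mul_assoc, ← mul_pow, inv_mul_cancel₀ hu,
      one_pow, mul_one]
  have hne : ∀ u : ℂ, ‖u‖ ≤ 1 → P.reverse.eval u ≠ 0 := by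
    intro u hu h0
    by_cases hu0 : u = 0
    · subst hu0
      rw [← coeff_zero_eq_eval_zero, coeff_zero_reverse] at h0
      exact hP0 (leadingCoeff_eq_zero.1 h0)
    rw [hev u hu0] at h0
    have h1 : P.eval u⁻¹ = 0 := (mul_eq_zero.1 h0).resolve_right (pow_ne_zero _ hu0)
    have h2 := hroots _ h1
    rw [norm_inv] at h2
    have h3 : ‖u‖ = 1 := le_antisymm hu (by
      have := (inv_le_one₀ (norm_pos_iff.2 hu0)).1 h2
      exact this)
    have := hP u⁻¹ (by simp [h3])
    rw [h1] at this; simp at this; linarith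
  have hd : DiffContOnCl ℂ (fun u => (P.reverse.eval u)⁻¹) (ball 0 1) := by
    apply DifferentiableOn.diffContOnCl
    rw [closure_ball _ one_ne_zero]
    intro u hu
    exact (P.reverse.differentiable u).differentiableWithinAt.inv
      (hne u (by simpa using hu))
  have := Complex.norm_le_of_forall_mem_frontier_norm_le (C := m⁻¹) isBounded_ball hd (by
    intro u hu
    rw [frontier_ball _ one_ne_zero] at hu
    have hu : ‖u‖ = 1 := by simpa using hu
    rw [norm_inv]
    apply inv_anti₀ hm
    rw [hev u (by rintro rfl; simp at hu)]
    simpa [hu] using hP u⁻¹ (by simp [hu])) (z := z) (by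
      rw [closure_ball _ one_ne_zero]; simpa using hz)
  rw [norm_inv] at this
  exact (inv_le_inv₀ (norm_pos_iff.2 (hne z hz)) hm).1 this

lemma perturb_s11 (P : ℂ[X]) (hn : 1 ≤ P.natDegree) (hroots : ∀ w : ℂ, P.IsRoot w → ‖w‖ ≤ 1)
    (m : ℝ) (hm : 0 < m)
    (hP : ∀ z : ℂ, ‖z‖ = 1 → m ≤ ‖P.eval z‖) (z : ℂ) (hz : ‖z‖ = 1) (μ : ℂ) (hμ : ‖μ‖ < m) :
    (P.natDegree : ℝ) / 2 * ‖P.eval z - μ * z ^ P.natDegree‖ ≤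
      ‖P.derivative.eval z - μ * (P.natDegree * z ^ (P.natDegree - 1))‖ := by
  have hR := reverse_lower P hroots m hm hP
  set n := P.natDegree with hn'
  have hdeg : (P - C μ * X ^ n).natDegree = n := by
    apply le_antisymm
    · exact (natDegree_sub_le _ _).trans (max_le le_rfl (natDegree_C_mul_X_pow_le _ _))
    · apply le_natDegree_of_ne_zero
      have := hR 0 (by simp)
      rw [← coeff_zero_eq_eval_zero, coeff_zero_reverse] at this
      rw [coeff_sub, coeff_C_mul_X_pow, if_pos rfl]
      intro h0
      rw [hn', coeff_natDegree, sub_eq_zero] at h0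
      rw [h0] at this; linarith
  have := turan (P - C μ * X ^ n) (by
    intro w hw
    by_contra! hw1
    have hw0 : w ≠ 0 := by rintro rfl; simp at hw1; linarith
    have h1 := hR w⁻¹ (by rw [norm_inv]; exact inv_le_one_of_one_le₀ hw1.le)
    have h2 : P.eval w = μ * w ^ n := by
      have : (P - C μ * X ^ n).eval w = 0 := hw
      simpa [sub_eq_zero] using this
    have h3 : P.reverse.eval w⁻¹ * w ^ n = P.eval w :=
      reverse_eval P w hw0
    rw [h2] at h3
    rw [mul_right_cancel₀ (pow_ne_zero _ hw0) h3] at h1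
    linarith) z hz
  rw [hdeg] at this
  simpa [derivative_X_pow] using this

theorem stmt_11 (n : ℕ) (hn : 1 ≤ n) (P : Polynomial ℂ) (hdeg : P.natDegree = n)
    (hroots : ∀ w : ℂ, P.IsRoot w → ‖w‖ ≤ 1) :
    maxMod (Polynomial.derivative P) 1 ≥ ((n : ℝ) / 2) * (maxMod P 1 + minMod P 1) := by
  have hn0 : (0 : ℝ) < n := by exact_mod_cast hn
  have hbdd : ∀ Q : ℂ[X], BddAbove (Set.range fun z : sphere (0 : ℂ) 1 => ‖Q.eval (z : ℂ)‖) := by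
    intro Q
    apply IsCompact.bddAbove
    apply isCompact_range
    fun_prop
  have hmin : ∀ z : ℂ, ‖z‖ = 1 → minMod P 1 ≤ ‖P.eval z‖ := fun z hz =>
    ciInf_le (f := fun z : sphere (0 : ℂ) 1 => ‖P.eval (z : ℂ)‖)
      ⟨0, by rintro _ ⟨x, rfl⟩; exact norm_nonneg _⟩ ⟨z, by simpa using hz⟩
  have hm0 : 0 ≤ minMod P 1 := Real.iInf_nonneg fun _ => norm_nonneg _
  set m := minMod P 1 with hm
  have key : ∀ z : ℂ, ‖z‖ = 1 → (n : ℝ) / 2 * (‖P.eval z‖ + m) ≤ ‖P.derivative.eval z‖ := by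
    intro z hz
    rcases hm0.eq_or_lt with h0 | h0
    · rw [← h0, add_zero, ← hdeg]; exact turan P hroots z hz
    have pt := perturb_s11 P (by omega) hroots m h0 hmin z hz
    rw [hdeg] at pt
    have hz0 : z ≠ 0 := by rintro rfl; simp at hz
    have hzn : z ^ (n - 1) ≠ 0 := pow_ne_zero _ hz0
    have hnC : (n : ℂ) ≠ 0 := by exact_mod_cast hn0.ne'
    have hPz := hmin z hz
    have h1 : n * m ≤ ‖P.derivative.eval z‖ := by
      by_contra! hlt
      set μ := P.derivative.eval z / (n * z ^ (n - 1)) with hμ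
      have hμm : ‖μ‖ < m := by
        rw [hμ]
        simp only [norm_div, norm_mul, norm_pow, hz, one_pow, mul_one, Complex.norm_natCast]
        rw [div_lt_iff₀ hn0]; linarith
      have h2 := pt μ hμm
      rw [hμ, div_mul_cancel₀ _ (mul_ne_zero hnC hzn), ← hμ, sub_self, norm_zero] at h2
      have h3 := norm_sub_norm_le (P.eval z) (μ * z ^ n)
      rw [norm_mul, norm_pow, hz, one_pow, mul_one] at h3
      have : 0 < (n : ℝ) / 2 * ‖P.eval z - μ * z ^ n‖ := by
        apply mul_pos <;> linarith
      linarith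
    set D := P.derivative.eval z with hD
    have hDpos : 0 < ‖D‖ := lt_of_lt_of_le (by positivity) h1
    have h4 : ∀ c : ℝ, 0 < c → c < m → (n : ℝ) / 2 * (‖P.eval z‖ + c) ≤ ‖D‖ := by
      intro c hc hcm
      set μ : ℂ := c * (D / ‖D‖) / z ^ (n - 1) with hμ
      have hDC : (‖D‖ : ℂ) ≠ 0 := by exact_mod_cast hDpos.ne'
      have hμn : ‖μ‖ = c := by
        rw [hμ]
        simp [hz, abs_of_pos hc, div_self hDpos.ne']
      have h2 := pt μ (by rw [hμn]; exact hcm)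
      have h5 : D - μ * (n * z ^ (n - 1)) = ((‖D‖ - n * c : ℝ) : ℂ) * (D / ‖D‖) := by
        rw [hμ]; push_cast; field_simp
      have h6 : ‖D - μ * (n * z ^ (n - 1))‖ = ‖D‖ - n * c := by
        rw [h5, norm_mul, Complex.norm_real, norm_div, Complex.norm_real, norm_norm,
          div_self hDpos.ne', mul_one, Real.norm_of_nonneg]
        nlinarith
      rw [h6] at h2
      have h3 := norm_sub_norm_le (P.eval z) (μ * z ^ n)
      rw [norm_mul, norm_pow, hz, one_pow, mul_one, hμn] at h3
      nlinarith
    have h7 : m ≤ ‖D‖ / (n / 2) - ‖P.eval z‖ := by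
      apply le_of_forall_lt_imp_le_of_dense
      intro c hc
      have h8 := h4 (max c (m / 2)) (lt_max_of_lt_right (by linarith)) (max_lt hc (by linarith))
      have h9 := le_max_left c (m / 2)
      rw [le_sub_iff_add_le, le_div_iff₀ (by positivity)]
      nlinarith
    rw [le_sub_iff_add_le, le_div_iff₀ (by positivity)] at h7
    linarith
  have hne : Nonempty (sphere (0 : ℂ) 1) := ⟨⟨1, by simp⟩⟩
  have : maxMod P 1 ≤ maxMod P.derivative 1 / (n / 2) - m := by
    apply ciSup_le
    rintro ⟨z, hz⟩
    have hz1 : ‖z‖ = 1 := by simpa using hz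
    have h1 := le_ciSup (hbdd P.derivative) ⟨z, hz⟩
    have h2 := key z hz1
    rw [le_sub_iff_add_le, le_div_iff₀ (by positivity)]
    have h3 : ‖P.derivative.eval z‖ ≤ maxMod P.derivative 1 := h1
    simp only
    linarith
  rw [le_sub_iff_add_le, le_div_iff₀ (by positivity)] at this
  linarith
end
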